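/- arXiv:1209.0429 — 2 statements merged into one kernel-verified Lean document; each statement's English description precedes it below -/
import Mathlib

section
/- Let D_{1,0} = D¹_0 and for r ≥ 2 define D_{r,0} = (1/(r−1))·[D¹_1, D_{r−1,0}] recursively in SH⁺. Then [D_{l,0}, D_{l',0}] = 0 for all l, l' ≥ 1; that is, the elements D_{l,0} pairwise commute in SH⁺. -/
noncomputable section

/-- The base field `F = ℂ(κ)`, rational functions over `ℂ`. -/
abbrev F : Type := RatFunc ℂ

/-- The formal parameter `κ ∈ F`. -/
noncomputable def κ : F := RatFunc.X

/-- Commutator `[a,b] = a*b - b*a` in an associative ring. -/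
def br {A : Type*} [Ring A] (a b : A) : A := a * b - b * a

/-- Generators of `SH⁺` : `D0 n` stands for `D⁰_{n+1}` (`l = n+1 ≥ 1`),
`D1 k` stands for `D¹_k` (`k ≥ 0`). -/
inductive Gen : Type
  | D0 : ℕ → Gen
  | D1 : ℕ → Gen

/-- `D⁰_{n+1}` as an element of the free algebra. -/
noncomputable def g0 (n : ℕ) : FreeAlgebra F Gen := FreeAlgebra.ι F (Gen.D0 n)

/-- `D¹_k` as an element of the free algebra. -/
noncomputable def g1 (k : ℕ) : FreeAlgebra F Gen := FreeAlgebra.ι F (Gen.D1 k)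

/-- Defining relations of `SH⁺`.  Recall `g0 n = D⁰_{n+1}`, so
`mix l k` says `[D⁰_{l+1}, D¹_k] = D¹_{(l+1)+k-1}`. -/
inductive SHRel : FreeAlgebra F Gen → FreeAlgebra F Gen → Prop
  | comm0 (l k : ℕ) : SHRel (br (g0 l) (g0 k)) 0
  | mix (l k : ℕ) : SHRel (br (g0 l) (g1 k)) (g1 (l + k))
  | quad : SHRel (3 * br (g1 2) (g1 1) - br (g1 3) (g1 0) + br (g1 1) (g1 0)
      + (κ * (κ - 1)) • (g1 0 * g1 0 + br (g1 1) (g1 0))) 0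
  | cubic : SHRel (br (g1 0) (br (g1 0) (g1 1))) 0

/-- The algebra `SH⁺`, presented by generators and relations. -/
abbrev SHp : Type := RingQuot SHRel

/-- `D⁰_l ∈ SH⁺` (meaningful for `l ≥ 1`). -/
noncomputable def D0 (l : ℕ) : SHp := RingQuot.mkAlgHom F SHRel (g0 (l - 1))

/-- `D¹_k ∈ SH⁺`. -/
noncomputable def D1 (k : ℕ) : SHp := RingQuot.mkAlgHom F SHRel (g1 k)

/-- `D_{r,0}`: `D_{1,0} = D¹_0` and `D_{r,0} = (1/(r-1))·[D¹_1, D_{r-1,0}]` for `r ≥ 2`. -/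
noncomputable def Drow : ℕ → SHp
  | 0 => 0
  | 1 => D1 0
  | (n + 2) => ((n + 1 : F)⁻¹) • br (D1 1) (Drow (n + 1))

/-!
Write `α_r = D_{r,0}` and `m_r = [D⁰_2, α_r]`, so that `r α_{r+1} = [D¹_1, α_r]` and `m_1 = D¹_1`.
The elements `m_r / r` behave like the Virasoro operators `L_r` acting on the bosonic modes `α_s`:
`(r + 1) [m_1, m_r] = r (r - 1) m_{r+1}`, and, as long as `α_1` commutes with the `α_s` of lower
degree, `[m_r, α_s] = r s α_{r+s}`. The first identity is equivalent to
`(r + 1) [D¹_2, α_r] = 2 r m_{r+1}`. The cubic and quadratic relations give the latter for `r = 2`.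
It propagates to all `r` because `[D¹_2, D¹_1]` commutes with `D¹_1`, another consequence of the
cubic relation. Applying `m_1` and `m_2` to brackets of lower total degree that already vanish then
gives `(n - 2) (n + 1) [α_1, α_n] = 0`; the case `n = 2` is the cubic relation. Finally, `m_1`
carries `[α_1, α_n] = 0` to all the other brackets.
-/

section LieRing

variable {L : Type*} [LieRing L]

/-- Families `d l = D⁰_{l+1}` and `e k = D¹_k` in a Lie ring satisfying the relations of `SH⁺` that
the commutation of the `D_{r,0}` rests on. The quadratic relation enters only through its bracket
with `D¹_0`, which removes all terms with `κ`. -/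
structure IsSHFamily (d e : ℕ → L) : Prop where
  lie_d_e (l k : ℕ) : ⁅d l, e k⁆ = e (l + k)
  cubic : ⁅e 0, ⁅e 0, e 1⁆⁆ = 0
  lie_quad : ⁅⁅e 3, e 0⁆, e 0⁆ = 3 • ⁅⁅e 2, e 1⁆, e 0⁆

/-- The sequence `α r = D_{r,0}` generated from `D¹_0` by `D¹_1`, with its recursion cleared of
denominators. The value `α 0 = 0` makes the recursion hold from `r = 0` on. -/
structure IsBosonRow (e α : ℕ → L) : Prop where
  zero : α 0 = 0
  one : α 1 = e 0
  succ (r : ℕ) : r • α (r + 1) = ⁅e 1, α r⁆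

variable {d e α : ℕ → L}

namespace IsBosonRow

theorem two (hα : IsBosonRow e α) : α 2 = ⁅e 1, e 0⁆ := by
  simpa [hα.one] using hα.succ 1

theorem nsmul_lie_succ (hα : IsBosonRow e α) (x : L) (r : ℕ) :
    r • ⁅x, α (r + 1)⁆ = ⁅⁅x, e 1⁆, α r⁆ + ⁅e 1, ⁅x, α r⁆⁆ := by
  rw [← lie_nsmul, hα.succ, leibniz_lie]

theorem lie_e_one_lie (hα : IsBosonRow e α) (r s : ℕ) :
    ⁅e 1, ⁅α r, α s⁆⁆ = r • ⁅α (r + 1), α s⁆ + s • ⁅α r, α (s + 1)⁆ := by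
  rw [leibniz_lie, ← hα.succ, ← hα.succ, nsmul_lie, lie_nsmul]

theorem lie_eq_zero_of_lie_one [IsAddTorsionFree L] (hα : IsBosonRow e α)
    (h_one : ∀ s, ⁅α 1, α s⁆ = 0) (r s : ℕ) : ⁅α r, α s⁆ = 0 := by
  induction r generalizing s with
  | zero => rw [hα.zero, zero_lie]
  | succ r ih =>
    rcases Nat.eq_zero_or_pos r with rfl | hr
    · exact h_one s
    · have h := hα.lie_e_one_lie r s
      rw [ih, ih, lie_zero, smul_zero, add_zero] at h
      exact (nsmul_eq_zero_iff_right hr.ne').mp h.symm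

end IsBosonRow

namespace IsSHFamily

theorem lie_e_one_lie_e_one_e_two [IsAddTorsionFree L] (h : IsSHFamily d e) :
    ⁅e 1, ⁅e 1, e 2⁆⁆ = 0 := by
  have leibniz (l i j k : ℕ) : ⁅d l, ⁅e i, ⁅e j, e k⁆⁆⁆ =
      ⁅e (l + i), ⁅e j, e k⁆⁆ + ⁅e i, ⁅e (l + j), e k⁆⁆ + ⁅e i, ⁅e j, e (l + k)⁆⁆ := by
    rw [leibniz_lie (d l), leibniz_lie (d l) (e j), h.lie_d_e, h.lie_d_e, h.lie_d_e, lie_add,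
      add_assoc]
  have h₁₁₁ : ⁅d 1, ⁅d 1, ⁅d 1, ⁅e 0, ⁅e 0, e 1⁆⁆⁆⁆⁆ = 0 := by simp [h.cubic]
  have h₁₂ : ⁅d 1, ⁅d 2, ⁅e 0, ⁅e 0, e 1⁆⁆⁆⁆ = 0 := by simp [h.cubic]
  have h₃ : ⁅d 3, ⁅e 0, ⁅e 0, e 1⁆⁆⁆ = 0 := by simp [h.cubic]
  simp only [leibniz, lie_add, Nat.reduceAdd] at h₁₁₁ h₁₂ h₃
  -- `d l` raises indices as the power sum `p_l` does exponents: `p₁³ - 3 p₁ p₂ + 2 p₃ = 6 x y z`.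
  have h_six : 6 • ⁅e 1, ⁅e 1, e 2⁆⁆ = 0 := by
    linear_combination (norm := module) h₁₁₁ - 3 • h₁₂ + 2 • h₃
  exact (nsmul_eq_zero_iff_right (by decide)).mp h_six

theorem lie_lie_e_two_e_one_e_one [IsAddTorsionFree L] (h : IsSHFamily d e) :
    ⁅⁅e 2, e 1⁆, e 1⁆ = 0 := by
  rw [← lie_skew, ← lie_skew (e 2), lie_neg, h.lie_e_one_lie_e_one_e_two, neg_zero, neg_zero]

theorem lie_d_one_boson_one (h : IsSHFamily d e) (hα : IsBosonRow e α) : ⁅d 1, α 1⁆ = e 1 := by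
  rw [hα.one, h.lie_d_e]

theorem lie_d_one_boson_two (h : IsSHFamily d e) (hα : IsBosonRow e α) :
    ⁅d 1, α 2⁆ = ⁅e 2, e 0⁆ := by
  simp [hα.two, leibniz_lie, h.lie_d_e]

theorem lie_boson_one_boson_two (h : IsSHFamily d e) (hα : IsBosonRow e α) : ⁅α 1, α 2⁆ = 0 := by
  rw [hα.one, hα.two, ← lie_skew (e 1), lie_neg, h.cubic, neg_zero]

theorem nsmul_lie_d_one_boson_succ (h : IsSHFamily d e) (hα : IsBosonRow e α) (r : ℕ) :
    r • ⁅d 1, α (r + 1)⁆ = ⁅e 2, α r⁆ + ⁅e 1, ⁅d 1, α r⁆⁆ := by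
  rw [hα.nsmul_lie_succ, h.lie_d_e]

theorem lie_e_two_boson_two (h : IsSHFamily d e) (hα : IsBosonRow e α) :
    ⁅e 2, α 2⁆ = 2 • ⁅⁅e 2, e 1⁆, e 0⁆ := by
  have h_d_two : ⁅d 2, α 2⁆ = ⁅e 3, e 0⁆ - ⁅e 2, e 1⁆ := by
    rw [hα.two, leibniz_lie, h.lie_d_e, h.lie_d_e, ← lie_skew (e 1), sub_eq_add_neg]
  have h_zero : ⁅d 2, ⁅α 1, α 2⁆⁆ = 0 := by rw [h.lie_boson_one_boson_two hα, lie_zero]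
  rw [leibniz_lie, hα.one, h.lie_d_e, h_d_two, ← lie_skew (e 0), sub_lie, h.lie_quad] at h_zero
  linear_combination (norm := module) h_zero

theorem two_nsmul_lie_d_one_boson_three (h : IsSHFamily d e) (hα : IsBosonRow e α) :
    2 • ⁅d 1, α 3⁆ = 3 • ⁅⁅e 2, e 1⁆, e 0⁆ := by
  have h_lie : ⁅e 2, α 2⁆ = ⁅⁅e 2, e 1⁆, e 0⁆ + ⁅e 1, ⁅e 2, e 0⁆⁆ := by
    rw [hα.two, leibniz_lie]
  have h_succ : 2 • ⁅d 1, α 3⁆ = ⁅e 2, α 2⁆ + ⁅e 1, ⁅e 2, e 0⁆⁆ := by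
    rw [← h.lie_d_one_boson_two hα]
    exact h.nsmul_lie_d_one_boson_succ hα 2
  linear_combination (norm := module) h_succ - h_lie + 2 • h.lie_e_two_boson_two hα

theorem nsmul_lie_e_one_lie_d_one_boson_of_lie_e_two (h : IsSHFamily d e)
    (hα : IsBosonRow e α) {r : ℕ}
    (hr : (r + 1) • ⁅e 2, α r⁆ = (2 * r) • ⁅d 1, α (r + 1)⁆) :
    (r + 1) • ⁅e 1, ⁅d 1, α r⁆⁆ = (r * (r - 1) : ℤ) • ⁅d 1, α (r + 1)⁆ := by
  linear_combination (norm := module) -((r + 1) • h.nsmul_lie_d_one_boson_succ hα r) - hr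

theorem nsmul_lie_lie_e_two_e_one_boson_of_lie_e_two [IsAddTorsionFree L] (h : IsSHFamily d e)
    (hα : IsBosonRow e α) {r : ℕ}
    (hr : (r + 1) • ⁅e 2, α r⁆ = (2 * r) • ⁅d 1, α (r + 1)⁆)
    (hr_succ : (r + 2) • ⁅e 2, α (r + 1)⁆ = (2 * (r + 1)) • ⁅d 1, α (r + 2)⁆) :
    (r + 2) • ⁅⁅e 2, e 1⁆, α r⁆ = (2 * r) • ⁅d 1, α (r + 2)⁆ := by
  have h_witt := h.nsmul_lie_e_one_lie_d_one_boson_of_lie_e_two hα hr_succ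
  push_cast at h_witt
  have hr_lie := congr(⁅e 1, $hr⁆)
  rw [lie_nsmul, lie_nsmul] at hr_lie
  refine nsmul_right_injective r.succ_ne_zero ?_
  linear_combination (norm := module) -(((r + 1) * (r + 2)) • hα.nsmul_lie_succ (e 2) r)
    - (r + 2) • hr_lie + (r * (r + 1)) • hr_succ - (2 * r) • h_witt

theorem nsmul_lie_e_two_boson_add_two [IsAddTorsionFree L] (h : IsSHFamily d e)
    (hα : IsBosonRow e α) {r : ℕ} (hr_pos : 0 < r)
    (hr : (r + 1) • ⁅e 2, α r⁆ = (2 * r) • ⁅d 1, α (r + 1)⁆)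
    (hr_succ : (r + 2) • ⁅e 2, α (r + 1)⁆ = (2 * (r + 1)) • ⁅d 1, α (r + 2)⁆) :
    (r + 3) • ⁅e 2, α (r + 2)⁆ = (2 * (r + 2)) • ⁅d 1, α (r + 3)⁆ := by
  have h_lie : (r + 2) • ⁅⁅e 2, e 1⁆, α (r + 1)⁆ = 2 • ⁅e 1, ⁅d 1, α (r + 2)⁆⁆ := by
    have h_succ := hα.nsmul_lie_succ ⁅e 2, e 1⁆ r
    have hr_lie := congr(⁅e 1, $(h.nsmul_lie_lie_e_two_e_one_boson_of_lie_e_two hα hr hr_succ)⁆)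
    rw [h.lie_lie_e_two_e_one_e_one, zero_lie, zero_add] at h_succ
    rw [lie_nsmul, lie_nsmul] at hr_lie
    refine nsmul_right_injective hr_pos.ne' ?_
    linear_combination (norm := module) (r + 2) • h_succ + hr_lie
  have h_e_two : (r + 1) • ⁅e 2, α (r + 2)⁆ = 2 • ⁅e 1, ⁅d 1, α (r + 2)⁆⁆ := by
    have h_succ := hα.nsmul_lie_succ (e 2) (r + 1)
    have hr_lie := congr(⁅e 1, $hr_succ⁆)
    rw [lie_nsmul, lie_nsmul] at hr_lie
    refine nsmul_right_injective (r + 1).succ_ne_zero ?_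
    linear_combination (norm := module) (r + 2) • h_succ + h_lie + hr_lie
  have h_succ := h.nsmul_lie_d_one_boson_succ hα (r + 2)
  linear_combination (norm := module) h_e_two - 2 • h_succ

theorem nsmul_lie_e_two_boson [IsAddTorsionFree L] (h : IsSHFamily d e)
    (hα : IsBosonRow e α) (r : ℕ) :
    (r + 1) • ⁅e 2, α r⁆ = (2 * r) • ⁅d 1, α (r + 1)⁆ := by
  induction r using Nat.twoStepInduction with
  | zero => simp [hα.zero]
  | one => rw [h.lie_d_one_boson_two hα, hα.one]
  | more r ihr ihr_succ =>
    rcases Nat.eq_zero_or_pos r with rfl | hr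
    · linear_combination (norm := module) 3 • h.lie_e_two_boson_two hα
        - 2 • h.two_nsmul_lie_d_one_boson_three hα
    · exact h.nsmul_lie_e_two_boson_add_two hα hr ihr ihr_succ

theorem nsmul_lie_e_one_lie_d_one_boson [IsAddTorsionFree L] (h : IsSHFamily d e)
    (hα : IsBosonRow e α) (r : ℕ) :
    (r + 1) • ⁅e 1, ⁅d 1, α r⁆⁆ = (r * (r - 1) : ℤ) • ⁅d 1, α (r + 1)⁆ :=
  h.nsmul_lie_e_one_lie_d_one_boson_of_lie_e_two hα (h.nsmul_lie_e_two_boson hα r)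

theorem lie_lie_d_one_boson_boson [IsAddTorsionFree L] (h : IsSHFamily d e)
    (hα : IsBosonRow e α) {n r s : ℕ}
    (h_lt : ∀ t < n, ⁅α 1, α t⁆ = 0) (h_le : r + s ≤ n) :
    ⁅⁅d 1, α r⁆, α s⁆ = (r * s) • α (r + s) := by
  induction s generalizing r with
  | zero => simp [hα.zero]
  | succ s ih =>
    rcases Nat.eq_zero_or_pos s with rfl | hs
    · have h_zero := congr(⁅d 1, $(h_lt r (by lia))⁆)
      rw [leibniz_lie, h.lie_d_one_boson_one hα, ← hα.succ, ← lie_skew, lie_zero] at h_zero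
      linear_combination (norm := module) -h_zero
    · have h_succ := hα.nsmul_lie_succ ⁅d 1, α r⁆ s
      have h_witt := congr(⁅$(h.nsmul_lie_e_one_lie_d_one_boson hα r), α s⁆)
      rw [← lie_skew _ (e 1), neg_lie, ih (by lia), lie_nsmul, ← hα.succ] at h_succ
      rw [nsmul_lie, zsmul_lie, ih (by lia), show r + 1 + s = r + s + 1 by ring] at h_witt
      refine nsmul_right_injective (mul_ne_zero r.succ_ne_zero hs.ne') ?_
      linear_combination (norm := module) (r + 1) • h_succ - h_witt

theorem lie_boson_one_boson [IsAddTorsionFree L] (h : IsSHFamily d e)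
    (hα : IsBosonRow e α) (n : ℕ) :
    ⁅α 1, α n⁆ = 0 := by
  induction n using Nat.strong_induction_on with
  | _ n ih =>
    match n with
    | 0 => rw [hα.zero, lie_zero]
    | 1 => exact lie_self _
    | 2 => exact h.lie_boson_one_boson_two hα
    | r + 3 =>
      have h_two : ⁅α 2, α (r + 1)⁆ = 0 := by
        have h_lie := hα.lie_e_one_lie 1 (r + 1)
        rw [ih _ (by lia), ih _ (by lia), lie_zero, smul_zero, add_zero] at h_lie
        simpa using h_lie.symm
      have h_one_lie := hα.lie_e_one_lie 1 (r + 2)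
      have h_two_lie := hα.lie_e_one_lie 2 (r + 1)
      have h_d_one_lie : ⁅⁅d 1, α 2⁆, ⁅α 1, α (r + 1)⁆⁆ =
          2 • ⁅α 3, α (r + 1)⁆ + (2 * (r + 1)) • ⁅α 1, α (r + 3)⁆ := by
        rw [leibniz_lie, h.lie_lie_d_one_boson_boson hα ih (by lia),
          h.lie_lie_d_one_boson_boson hα ih (by lia), nsmul_lie, lie_nsmul,
          show 2 + (r + 1) = r + 3 by ring]
      rw [ih _ (by lia), lie_zero] at h_one_lie h_d_one_lie
      rw [h_two, lie_zero] at h_two_lie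
      refine (nsmul_eq_zero_iff_right (show (r + 1) * (r + 4) ≠ 0 by positivity)).mp ?_
      linear_combination (norm := module) h_two_lie - h_d_one_lie - (r + 1) • h_one_lie

end IsSHFamily

theorem statement0_general [IsAddTorsionFree L] (h : IsSHFamily d e) (hα : IsBosonRow e α)
    (l l' : ℕ) : ⁅α l, α l'⁆ = 0 :=
  hα.lie_eq_zero_of_lie_one (h.lie_boson_one_boson hα) l l'

end LieRing

attribute [local instance] LieRing.ofAssociativeRing

theorem lie_D0_D1 (l k : ℕ) : ⁅D0 (l + 1), D1 k⁆ = D1 (l + k) := by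
  simpa [br, D0, D1, Ring.lie_def] using RingQuot.mkAlgHom_rel F (SHRel.mix l k)

theorem lie_D1_zero_lie_D1_zero_D1_one : ⁅D1 0, ⁅D1 0, D1 1⁆⁆ = 0 := by
  simpa [br, D1, Ring.lie_def] using RingQuot.mkAlgHom_rel F SHRel.cubic

theorem D1_quad : 3 • ⁅D1 2, D1 1⁆ - ⁅D1 3, D1 0⁆ + ⁅D1 1, D1 0⁆
    + (κ * (κ - 1)) • (D1 0 * D1 0 + ⁅D1 1, D1 0⁆) = 0 := by
  rw [nsmul_eq_mul, Nat.cast_ofNat]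
  simpa only [br, D1, Ring.lie_def, map_add, map_sub, map_mul, map_smul, map_ofNat,
    map_zero] using RingQuot.mkAlgHom_rel F SHRel.quad

theorem lie_lie_D1_three_D1_zero_D1_zero :
    ⁅⁅D1 3, D1 0⁆, D1 0⁆ = 3 • ⁅⁅D1 2, D1 1⁆, D1 0⁆ := by
  have h_cubic : ⁅⁅D1 1, D1 0⁆, D1 0⁆ = 0 := by
    rw [← lie_skew, ← lie_skew (D1 1), lie_neg, lie_D1_zero_lie_D1_zero_D1_one, neg_zero, neg_zero]
  have h_commute : Commute (D1 0 * D1 0 + ⁅D1 1, D1 0⁆) (D1 0) :=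
    ((Commute.refl _).mul_left (.refl _)).add_left (commute_iff_lie_eq.mpr h_cubic)
  have h_quad := congr(⁅$D1_quad, D1 0⁆)
  rw [add_lie, add_lie, sub_lie, nsmul_lie, h_cubic, (h_commute.smul_left _).lie_eq, zero_lie,
    add_zero, add_zero] at h_quad
  exact (sub_eq_zero.mp h_quad).symm

theorem isSHFamily_D0_D1 : IsSHFamily (fun l => D0 (l + 1)) D1 where
  lie_d_e := lie_D0_D1
  cubic := lie_D1_zero_lie_D1_zero_D1_one
  lie_quad := lie_lie_D1_three_D1_zero_D1_zero

theorem isBosonRow_Drow : IsBosonRow D1 Drow where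
  zero := rfl
  one := rfl
  succ r := by
    cases r with
    | zero => simp [Drow]
    | succ r =>
      have hr : ((r : F) + 1) ≠ 0 := Nat.cast_add_one_ne_zero r
      rw [Drow, ← Nat.cast_smul_eq_nsmul F]
      push_cast
      rw [smul_inv_smul₀ hr]
      rfl

/-- The elements `D_{l,0}`, `l ≥ 1`, pairwise commute in `SH⁺`. -/
theorem statement0 :
    ∀ l l' : ℕ, 1 ≤ l → 1 ≤ l' → br (Drow l) (Drow l') = 0 :=
  have : IsAddTorsionFree SHp := .of_isTorsionFree F SHp
  fun l l' _ _ => statement0_general isSHFamily_D0_D1 isBosonRow_Drow l l'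
end
end

section
/- Define F-submodules F(r,d) of SH⁺ for r ≥ 1 and d ∈ ℤ as follows: F(1,d) is the F-span of {D¹_k : 0 ≤ k ≤ d} (so F(1,d) = 0 for d < 0); and for r ≥ 2, F(r,d) is the submodule generated by all products a·b with a ∈ F(r',d'), b ∈ F(r'',d''), r' + r'' = r, r', r'' ≥ 1, d' + d'' = d, together with all commutators [D¹_l, y] with 0 ≤ l ≤ d+1 and y ∈ F(r−1, d−l+1). Then for all r₁, r₂ ≥ 1 and all d₁, d₂ ∈ ℤ, and all a ∈ F(r₁,d₁), b ∈ F(r₂,d₂), the commutator [a,b] = ab − ba lies in F(r₁+r₂, d₁+d₂−1). -/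
noncomputable section

/-- Auxiliary, fuel-based construction of the filtration submodules `F(r,d)`.
The first argument is fuel; `FiltAux fuel r d` is the correct value of `F(r,d)`
whenever `r ≤ fuel + 1` (the recursion at rank `r` only ever refers to strictly
smaller ranks). -/
noncomputable def FiltAux : ℕ → ℕ → ℤ → Submodule F SHp
  | _, 0, _ => ⊥
  | _, 1, d => Submodule.span F {x | ∃ k : ℕ, (k : ℤ) ≤ d ∧ x = D1 k}
  | 0, _ + 2, _ => ⊥
  | fuel + 1, n + 2, d =>
      Submodule.span F
        ({x | ∃ r' r'' : ℕ, ∃ d' d'' : ℤ, 1 ≤ r' ∧ 1 ≤ r'' ∧ r' + r'' = n + 2 ∧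
            d' + d'' = d ∧ ∃ a ∈ FiltAux fuel r' d', ∃ b ∈ FiltAux fuel r'' d'', x = a * b} ∪
         {x | ∃ l : ℕ, (l : ℤ) ≤ d + 1 ∧ ∃ y ∈ FiltAux fuel (n + 1) (d - l + 1),
            x = br (D1 l) y})

/-- The submodules `F(r,d) ⊆ SH⁺` (`r ≥ 1`, `d ∈ ℤ`):
`F(1,d)` is the span of the `D¹_k` with `0 ≤ k ≤ d`, and for `r ≥ 2`, `F(r,d)` is
generated by the products `a·b`, `a ∈ F(r',d')`, `b ∈ F(r'',d'')`, `r'+r''=r`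
(`r',r'' ≥ 1`), `d'+d''=d`, together with the commutators `[D¹_l, y]`,
`0 ≤ l ≤ d+1`, `y ∈ F(r-1, d-l+1)`. -/
noncomputable def Filt (r : ℕ) (d : ℤ) : Submodule F SHp := FiltAux r r d

/-!
Think of `D¹_k` as `z ξ^k` and of `D⁰_{l+1}` as `ξ^{l+1} / (l + 1)`, with the Poisson bracket
`{ξ, z} = z`. Modulo lower degree and products of elements of smaller rank, `F(r, d)` turns out to
be spanned by a single element with symbol `z^r ξ^d`, and commutators are given by
`{z ξ^k, z^r ξ^d} = (k r - d) z^{r+1} ξ^{k+d-1}`.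

For `r = 1` this comes from the quadratic relation: applying `ad D⁰_l` spreads it to all third
differences of `[D¹_a, D¹_b]` along the antidiagonals, so that by antisymmetry the bracket is a
multiple of `a - b`. For larger `r` it follows by induction from the Jacobi identity, except that
the vanishing of `[D¹_0, z^r]` starts with the cubic relation for `r = 2`.

In particular nothing survives in negative degree, the only candidate `{z, z^r}` being zero. Hence
the restriction `l ≤ d + 1` on the commutators `[D¹_l, y]` generating `F(r, d)` only omits those
with `y = 0`. Without this restriction, closure under commutators is a formal consequence of the
Jacobi and Leibniz identities.
-/

section Filtration

attribute [local instance] LieRing.ofAssociativeRing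

variable (K : Type*) {A : Type*} [CommRing K] [Ring A] [Algebra K A] (e : ℕ → A)

/-- Membership in the family of submodules `F(r, d)`, `r : ℕ`, `d : ℤ`, generated by the
`e k ∈ F(1, d)` for `k ≤ d`, by products, and by the commutators `⁅e l, y⁆` for those `y` whose
degree lies in `I`. The condition `0 ≤ l ≤ d + 1` on the generator `⁅e l, y⁆` of `F(r, d)`,
`y ∈ F(r - 1, d - l + 1)`, says that `y` has nonnegative degree, i.e. `I = Set.Ici 0`. -/
inductive FiltrationMem (I : Set ℤ) : ℕ → ℤ → A → Prop
  | zero (r : ℕ) (d : ℤ) : FiltrationMem I r d 0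
  | add {r : ℕ} {d : ℤ} {x y : A} :
      FiltrationMem I r d x → FiltrationMem I r d y → FiltrationMem I r d (x + y)
  | smul {r : ℕ} {d : ℤ} {x : A} (c : K) : FiltrationMem I r d x → FiltrationMem I r d (c • x)
  | gen {k : ℕ} {d : ℤ} : (k : ℤ) ≤ d → FiltrationMem I 1 d (e k)
  | mul {r s : ℕ} {d d' : ℤ} {a b : A} :
      FiltrationMem I r d a → FiltrationMem I s d' b → FiltrationMem I (r + s) (d + d') (a * b)
  | lie {r : ℕ} {d : ℤ} {y : A} (l : ℕ) :
      d ∈ I → FiltrationMem I r d y → FiltrationMem I (r + 1) (d + l - 1) ⁅e l, y⁆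

/-- The submodules `F(r, d)` defined by `FiltrationMem`. -/
def filtration (I : Set ℤ) (r : ℕ) (d : ℤ) : Submodule K A where
  carrier := {x | FiltrationMem K e I r d x}
  zero_mem' := .zero r d
  add_mem' := .add
  smul_mem' c _ := .smul c

/-- The variant of `F(r, d)` in which commutators `⁅e l, y⁆` are adjoined for all `y`. It is closed
under commutators for formal reasons, and it turns out to agree with `F(r, d)`. -/
abbrev adFiltration : ℕ → ℤ → Submodule K A := filtration K e Set.univ

variable {K e}

theorem filtration_mono_left {I J : Set ℤ} (hIJ : I ⊆ J) (r : ℕ) (d : ℤ) :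
    filtration K e I r d ≤ filtration K e J r d := by
  intro x hx
  induction hx with
  | zero => exact zero_mem _
  | add _ _ ihx ihy => exact add_mem ihx ihy
  | smul c _ ih => exact Submodule.smul_mem _ c ih
  | gen hk => exact .gen hk
  | mul _ _ iha ihb => exact .mul iha ihb
  | lie l hd _ ih => exact .lie l (hIJ hd) ih

theorem gen_mem_filtration {I : Set ℤ} {k : ℕ} {d : ℤ} (hk : (k : ℤ) ≤ d) :
    e k ∈ filtration K e I 1 d :=
  .gen hk

theorem mul_mem_filtration {I : Set ℤ} {r s t : ℕ} {d d' d'' : ℤ} {a b : A}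
    (ha : a ∈ filtration K e I r d) (hb : b ∈ filtration K e I s d')
    (ht : r + s = t := by omega) (hd : d + d' = d'' := by omega) :
    a * b ∈ filtration K e I t d'' := by
  subst ht hd
  exact .mul ha hb

theorem gen_lie_mem_adFiltration {r t : ℕ} {d d' : ℤ} (l : ℕ) {y : A}
    (hy : y ∈ adFiltration K e r d) (ht : r + 1 = t := by omega)
    (hd : d + l - 1 = d' := by omega) : ⁅e l, y⁆ ∈ adFiltration K e t d' := by
  subst ht hd
  exact .lie l (Set.mem_univ d) hy

theorem adFiltration_mono {r : ℕ} {d d' : ℤ} (h : d ≤ d') :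
    adFiltration K e r d ≤ adFiltration K e r d' := by
  intro x hx
  induction hx generalizing d' with
  | zero => exact zero_mem _
  | add _ _ ihx ihy => exact add_mem (ihx h) (ihy h)
  | smul c _ ih => exact Submodule.smul_mem _ c (ih h)
  | gen hk => exact gen_mem_filtration (hk.trans h)
  | @mul r s d₁ d₂ a b ha _ _ ihb =>
    exact mul_mem_filtration ha (ihb (d' := d' - d₁) (by omega))
  | @lie r d₁ y l _ _ ih => exact gen_lie_mem_adFiltration l (ih (d' := d' - l + 1) (by omega))

theorem filtration_eq_bot_of_add_nonpos {I : Set ℤ} {r : ℕ} {d : ℤ} (h : d + r ≤ 0) :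
    filtration K e I r d = ⊥ := by
  refine (Submodule.eq_bot_iff _).2 fun x hx => ?_
  induction hx with
  | zero => rfl
  | add _ _ ihx ihy => rw [ihx h, ihy h, add_zero]
  | smul c _ ih => rw [ih h, smul_zero]
  | gen hk => omega
  | @mul r s d d' a b _ _ iha ihb =>
    rcases le_or_gt (d + r) 0 with hr | hr
    · rw [iha hr, zero_mul]
    · rw [ihb (by omega), mul_zero]
  | lie l _ _ ih => rw [ih (by omega), lie_zero]

theorem filtration_rank_zero (I : Set ℤ) (d : ℤ) : filtration K e I 0 d = ⊥ := by
  refine (Submodule.eq_bot_iff _).2 fun x hx => ?_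
  generalize hr : 0 = r at hx
  induction hx with
  | zero => rfl
  | add _ _ ihx ihy => rw [ihx hr, ihy hr, add_zero]
  | smul c _ ih => rw [ih hr, smul_zero]
  | mul _ _ iha _ => rw [iha (by omega), zero_mul]
  | gen | lie => omega

-- At reducible transparency `lie_smul` does not see the scalar action of an associative algebra.
theorem lie_smul_eq (c : K) (x y : A) : ⁅x, c • y⁆ = c • ⁅x, y⁆ :=
  lie_smul c x y

theorem lie_mul_eq (x a b : A) : ⁅x, a * b⁆ = ⁅x, a⁆ * b + a * ⁅x, b⁆ := by
  simp only [Ring.lie_def]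
  noncomm_ring

theorem mul_lie_eq (a b x : A) : ⁅a * b, x⁆ = a * ⁅b, x⁆ + ⁅a, x⁆ * b := by
  simp only [Ring.lie_def]
  noncomm_ring

theorem lie_mem_adFiltration {r s t : ℕ} {d d' d'' : ℤ} {a b : A} (ha : a ∈ adFiltration K e r d)
    (hb : b ∈ adFiltration K e s d') (ht : r + s = t := by omega)
    (hd : d + d' - 1 = d'' := by omega) : ⁅a, b⁆ ∈ adFiltration K e t d'' := by
  subst ht hd
  induction ha generalizing s d' b with
  | zero => rw [zero_lie]; exact zero_mem _
  | add _ _ ihx ihy => rw [add_lie]; exact add_mem (ihx hb) (ihy hb)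
  | smul c _ ih => rw [smul_lie]; exact Submodule.smul_mem _ c (ih hb)
  | gen hk =>
    exact adFiltration_mono (by omega) (gen_lie_mem_adFiltration _ hb (add_comm _ _) rfl)
  | mul hx hy ihx ihy =>
    rw [mul_lie_eq]
    exact add_mem (mul_mem_filtration hx (ihy hb)) (mul_mem_filtration (ihx hb) hy)
  | lie l _ _ ih =>
    rw [lie_lie]
    refine sub_mem (gen_lie_mem_adFiltration l (ih hb)) ?_
    convert ih (gen_lie_mem_adFiltration l hb rfl rfl) using 2 <;> ring

theorem shift_lie_mem_adFiltration {h : A} {l : ℕ} (hh : ∀ k, ⁅h, e k⁆ = e (l + k)) {r : ℕ}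
    {d d' : ℤ} {x : A} (hx : x ∈ adFiltration K e r d) (hd : l + d = d' := by omega) :
    ⁅h, x⁆ ∈ adFiltration K e r d' := by
  induction hx generalizing d' with
  | zero => rw [lie_zero]; exact zero_mem _
  | add _ _ ihx ihy => rw [lie_add]; exact add_mem (ihx hd) (ihy hd)
  | smul c _ ih => rw [lie_smul_eq]; exact Submodule.smul_mem _ c (ih hd)
  | gen hk => rw [hh]; exact gen_mem_filtration (by push_cast; omega)
  | mul ha hb iha ihb =>
    rw [lie_mul_eq]
    exact add_mem (mul_mem_filtration (iha rfl) hb) (mul_mem_filtration ha (ihb rfl))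
  | lie k _ hy ih =>
    rw [leibniz_lie, hh]
    exact add_mem (gen_lie_mem_adFiltration _ hy) (gen_lie_mem_adFiltration _ (ih rfl))

variable (K e) in
/-- The elements of `F(r, d)` that are trivial for the symbol calculus: those of lower degree, and
the span of the products of elements of smaller rank. -/
def decomposables (r : ℕ) (d : ℤ) : Submodule K A :=
  adFiltration K e r (d - 1) ⊔ Submodule.span K {x | ∃ r' r'' : ℕ, ∃ d' d'' : ℤ,
    r' + r'' = r ∧ d' + d'' = d ∧
      ∃ a ∈ adFiltration K e r' d', ∃ b ∈ adFiltration K e r'' d'', x = a * b}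

theorem mem_decomposables_of_lt {r : ℕ} {d d' : ℤ} {x : A} (hx : x ∈ adFiltration K e r d')
    (h : d' < d := by omega) : x ∈ decomposables K e r d :=
  Submodule.mem_sup_left (adFiltration_mono (by omega) hx)

theorem mul_mem_decomposables {r s t : ℕ} {d d' d'' : ℤ} {a b : A}
    (ha : a ∈ adFiltration K e r d) (hb : b ∈ adFiltration K e s d')
    (ht : r + s = t := by omega) (hd : d + d' = d'' := by omega) :
    a * b ∈ decomposables K e t d'' :=
  Submodule.mem_sup_right (Submodule.subset_span ⟨r, s, d, d', ht, hd, a, ha, b, hb, rfl⟩)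

theorem decomposables_le {r : ℕ} {d : ℤ} {M : Submodule K A}
    (low : adFiltration K e r (d - 1) ≤ M)
    (mul : ∀ r' r'' : ℕ, ∀ d' d'' : ℤ, r' + r'' = r → d' + d'' = d →
      ∀ a ∈ adFiltration K e r' d', ∀ b ∈ adFiltration K e r'' d'', a * b ∈ M) :
    decomposables K e r d ≤ M := by
  refine sup_le low (Submodule.span_le.2 ?_)
  rintro _ ⟨r', r'', d', d'', hr, hd, a, ha, b, hb, rfl⟩
  exact mul r' r'' d' d'' hr hd a ha b hb

theorem lie_mem_of_mem_decomposables {r : ℕ} {d : ℤ} {M : Submodule K A} {h x : A}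
    (hx : x ∈ decomposables K e r d) (low : ∀ y ∈ adFiltration K e r (d - 1), ⁅h, y⁆ ∈ M)
    (mul : ∀ r' r'' : ℕ, ∀ d' d'' : ℤ, r' + r'' = r → d' + d'' = d →
      ∀ a ∈ adFiltration K e r' d', ∀ b ∈ adFiltration K e r'' d'',
        ⁅h, a⁆ * b ∈ M ∧ a * ⁅h, b⁆ ∈ M) :
    ⁅h, x⁆ ∈ M := by
  suffices H : decomposables K e r d ≤
      M.comap (LinearMap.mulLeft K h - LinearMap.mulRight K h) from H hx
  refine decomposables_le low fun r' r'' d' d'' hr hd a ha b hb => ?_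
  change ⁅h, a * b⁆ ∈ M
  rw [lie_mul_eq]
  obtain ⟨h₁, h₂⟩ := mul r' r'' d' d'' hr hd a ha b hb
  exact add_mem h₁ h₂

theorem shift_lie_mem_decomposables {h : A} {l : ℕ} (hh : ∀ k, ⁅h, e k⁆ = e (l + k)) {r : ℕ}
    {d d' : ℤ} {x : A} (hx : x ∈ decomposables K e r d) (hd : l + d = d' := by omega) :
    ⁅h, x⁆ ∈ decomposables K e r d' :=
  lie_mem_of_mem_decomposables hx
    (fun _ hy => mem_decomposables_of_lt (shift_lie_mem_adFiltration hh hy rfl))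
    fun _ _ _ _ _ _ _ ha _ hb =>
      ⟨mul_mem_decomposables (shift_lie_mem_adFiltration hh ha rfl) hb,
        mul_mem_decomposables ha (shift_lie_mem_adFiltration hh hb rfl)⟩

theorem lie_mem_decomposables {r s t : ℕ} {d d' d'' : ℤ} {a x : A}
    (ha : a ∈ adFiltration K e r d) (hx : x ∈ decomposables K e s d')
    (ht : r + s = t := by omega) (hd : d + d' - 1 = d'' := by omega) :
    ⁅a, x⁆ ∈ decomposables K e t d'' :=
  lie_mem_of_mem_decomposables hx
    (fun _ hy => mem_decomposables_of_lt (lie_mem_adFiltration ha hy ht rfl))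
    fun _ _ _ _ _ _ _ hb _ hc =>
      ⟨mul_mem_decomposables (lie_mem_adFiltration ha hb rfl rfl) hc,
        mul_mem_decomposables hb (lie_mem_adFiltration ha hc rfl rfl)⟩

theorem adFiltration_succ_le {r : ℕ} {d : ℤ} {M : Submodule K A}
    (hM : decomposables K e (r + 1) d ≤ M) (gen : r = 0 → ∀ k : ℕ, (k : ℤ) = d → e k ∈ M)
    (lie : ∀ l : ℕ, ∀ y ∈ adFiltration K e r (d - l + 1), ⁅e l, y⁆ ∈ M) :
    adFiltration K e (r + 1) d ≤ M := by
  intro x hx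
  generalize hr : r + 1 = r' at hx
  induction hx with
  | zero => exact zero_mem _
  | add _ _ ihx ihy => exact add_mem (ihx hM gen lie hr) (ihy hM gen lie hr)
  | smul c _ ih => exact Submodule.smul_mem _ c (ih hM gen lie hr)
  | @gen k d hk =>
    obtain rfl : r = 0 := by omega
    rcases hk.eq_or_lt with hk | hk
    · exact gen rfl k hk
    · exact hM (mem_decomposables_of_lt (gen_mem_filtration le_rfl))
  | mul ha hb => exact hM (mul_mem_decomposables ha hb)
  | @lie s s' y l _ hy =>
    obtain rfl : r = s := by omega
    exact lie l y (by rwa [show s' + (l : ℤ) - 1 - l + 1 = s' by ring])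

/-- Products of total negative degree have a factor of negative degree, so below degree zero
decomposability means lower degree by induction on the rank; the degree of a nonzero element of
rank `r` being greater than `-r`, this cannot go on indefinitely. -/
theorem adFiltration_eq_bot_of_le_decomposables
    (H : ∀ r : ℕ, ∀ d < 0, adFiltration K e r d ≤ decomposables K e r d) (r : ℕ) {d : ℤ}
    (hd : d < 0) : adFiltration K e r d = ⊥ := by
  induction r using Nat.strong_induction_on generalizing d with
  | _ r ih =>
  have of_rank_lt {r' : ℕ} {d' : ℤ} {a : A} (ha : a ∈ adFiltration K e r' d') (hr : r' < r)
      (hd' : d' < 0) : a = 0 := (Submodule.eq_bot_iff _).1 (ih r' hr hd') a ha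
  have of_rank_zero {d' : ℤ} {a : A} (ha : a ∈ adFiltration K e 0 d') : a = 0 :=
    (Submodule.eq_bot_iff _).1 (filtration_rank_zero _ d') a ha
  have descend : ∀ d < 0, adFiltration K e r d ≤ adFiltration K e r (d - 1) := by
    intro d hd
    refine (H r d hd).trans (decomposables_le le_rfl fun r' r'' d' d'' hr hd' a ha b hb => ?_)
    suffices a * b = 0 from this ▸ zero_mem _
    rcases r'.eq_zero_or_pos with rfl | hr'
    · rw [of_rank_zero ha, zero_mul]
    rcases r''.eq_zero_or_pos with rfl | hr''
    · rw [of_rank_zero hb, mul_zero]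
    rcases lt_or_ge d' 0 with hneg | hnonneg
    · rw [of_rank_lt ha (by omega) hneg, zero_mul]
    · rw [of_rank_lt hb (by omega) (by omega), mul_zero]
  have iterate (n : ℕ) : adFiltration K e r d ≤ adFiltration K e r (d - n) := by
    induction n with
    | zero => simp
    | succ n ihn =>
      exact (ihn.trans (descend _ (by omega))).trans (adFiltration_mono (by push_cast; omega))
  exact eq_bot_iff.2 ((iterate r).trans (filtration_eq_bot_of_add_nonpos (by omega)).le)

end Filtration

section DoubleSequences

theorem eq_of_antidiagonal_step {V : Type*} {f : ℕ → ℕ → V} {n : ℕ}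
    (hf : ∀ a b, a + b + 1 = n → f (a + 1) b = f a (b + 1)) {a b : ℕ} (hab : a + b = n) :
    f a b = f 0 n := by
  induction a generalizing b with
  | zero => rw [← hab, zero_add]
  | succ a ih => rw [hf a b (by omega), ih (by omega)]

variable {K V : Type*} [Field K] [CharZero K] [AddCommGroup V] [Module K V] {y : ℕ → ℕ → V}

theorem secondDiff_eq_zero_of_thirdDiff_eq_zero {n : ℕ}
    (antisymm : ∀ a b, a + b = n + 2 → y a b + y b a = 0)
    (thirdDiff : ∀ a b, a + b + 1 = n →
      y (a + 3) b - (3 : K) • y (a + 2) (b + 1) + (3 : K) • y (a + 1) (b + 2) - y a (b + 3) = 0)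
    {a b : ℕ} (hab : a + b = n) :
    y (a + 2) b - (2 : K) • y (a + 1) (b + 1) + y a (b + 2) = 0 := by
  let D (a b : ℕ) := y (a + 2) b - (2 : K) • y (a + 1) (b + 1) + y a (b + 2)
  have D_const {a b : ℕ} (h : a + b = n) : D a b = D 0 n :=
    eq_of_antidiagonal_step (fun a b h => by
      linear_combination (norm := module) thirdDiff a b h) h
  have D_antisymm : D a b + D b a = 0 := by
    linear_combination (norm := module) antisymm (a + 2) b (by omega)
      - (2 : K) • antisymm (a + 1) (b + 1) (by omega) + antisymm a (b + 2) (by omega)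
  have D_eq : D b a = D a b := (D_const (by omega)).trans (D_const hab).symm
  change D a b = 0
  rw [D_eq] at D_antisymm
  linear_combination (norm := module) (2⁻¹ : K) • D_antisymm

theorem smul_eq_of_thirdDiff_eq_zero {n : ℕ} (antisymm : ∀ a b, a + b = n → y a b + y b a = 0)
    (thirdDiff : ∀ a b, a + b + 3 = n →
      y (a + 3) b - (3 : K) • y (a + 2) (b + 1) + (3 : K) • y (a + 1) (b + 2) - y a (b + 3) = 0)
    {a b : ℕ} (hab : a + b = n) : (n : K) • y a b = ((b : K) - a) • y 0 n := by
  rcases n with - | n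
  · obtain ⟨rfl, rfl⟩ : a = 0 ∧ b = 0 := by omega
    simp
  have step (a b : ℕ) (h : a + b + 1 = n) :
      y (a + 1 + 1) b - y (a + 1) (b + 1) = y (a + 1) (b + 1) - y a (b + 1 + 1) := by
    obtain rfl : n = a + b + 1 := h.symm
    have secondDiff := secondDiff_eq_zero_of_thirdDiff_eq_zero antisymm
      (fun a b h => thirdDiff a b (by omega)) (rfl : a + b = a + b)
    linear_combination (norm := module) secondDiff
  have firstDiff {a b : ℕ} (h : a + b = n) :
      y (a + 1) b - y a (b + 1) = y 1 n - y 0 (n + 1) :=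
    eq_of_antidiagonal_step (f := fun a b => y (a + 1) b - y a (b + 1)) step h
  have affine (a b : ℕ) (h : a + b = n + 1) :
      y a b = y 0 (n + 1) + (a : K) • (y 1 n - y 0 (n + 1)) := by
    induction a generalizing b with
    | zero =>
      obtain rfl : b = n + 1 := by omega
      simp
    | succ a ih =>
      push_cast
      linear_combination (norm := module) firstDiff (a := a) (b := b) (by omega)
        + ih (b + 1) (by omega)
  have slope : y 0 (n + 1) + (y 0 (n + 1) + (n + 1 : K) • (y 1 n - y 0 (n + 1))) = 0 := by
    have := antisymm 0 (n + 1) (by omega)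
    rw [affine (n + 1) 0 rfl] at this
    exact_mod_cast this
  rw [affine a b hab]
  have hb : (b : K) = n + 1 - a := by rw [eq_sub_iff_add_eq']; exact_mod_cast hab
  rw [hb]
  push_cast
  linear_combination (norm := module) (a : K) • slope

theorem smul_eq_of_symm_of_cross {m : ℕ} {s : K}
    (symm : ∀ a b, a + b = m + 1 → y a b + y b a = (1 - s) • y 0 (m + 1))
    (cross : ∀ j k, j + k = m → ((j : K) + 1) • (y (k + 1) j - y 0 (m + 1)) =
      ((k : K) + 1) • (y (j + 1) k - y 0 (m + 1)))
    {a b : ℕ} (hab : a + b = m + 1) :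
    ((m : K) + 1) • y a b = ((b : K) - a * s) • y 0 (m + 1) := by
  induction a generalizing b with
  | zero =>
    obtain rfl : b = m + 1 := by omega
    simp
  | succ a ih =>
    obtain rfl : m = b + a := by omega
    refine smul_right_injective V (Nat.cast_add_one_ne_zero (R := K) b) ?_
    have h₁ := ih (b := b + 1) (by omega)
    have h₂ := cross b a rfl
    have h₃ := symm (b + 1) a (by omega)
    push_cast at h₁ ⊢
    linear_combination (norm := module) ((b : K) + a + 1) • h₂
      + (((b : K) + a + 1) * (a + 1)) • h₃ - ((a : K) + 1) • h₁

end DoubleSequences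

section SymbolCalculus

attribute [local instance] LieRing.ofAssociativeRing

variable {K A : Type*} [Field K] [Ring A] [Algebra K A] {e : ℕ → A}

theorem lie_smodEq {r s t : ℕ} {d d' d'' : ℤ} {a x y : A} (ha : a ∈ adFiltration K e r d)
    (hxy : x ≡ y [SMOD decomposables K e s d']) (ht : r + s = t := by omega)
    (hd : d + d' - 1 = d'' := by omega) : ⁅a, x⁆ ≡ ⁅a, y⁆ [SMOD decomposables K e t d''] := by
  rw [SModEq.sub_mem] at hxy ⊢
  rw [← lie_sub]
  exact lie_mem_decomposables ha hxy

theorem smodEq_lie {r s t : ℕ} {d d' d'' : ℤ} {a x y : A} (ha : a ∈ adFiltration K e r d)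
    (hxy : x ≡ y [SMOD decomposables K e s d']) (ht : s + r = t := by omega)
    (hd : d' + d - 1 = d'' := by omega) : ⁅x, a⁆ ≡ ⁅y, a⁆ [SMOD decomposables K e t d''] := by
  rw [← lie_skew, ← lie_skew y]
  exact (lie_smodEq ha hxy).neg

theorem gen_lie_smodEq (l : ℕ) {r t : ℕ} {d d' : ℤ} {x y : A}
    (hxy : x ≡ y [SMOD decomposables K e r d]) (ht : r + 1 = t := by omega)
    (hd : d + l - 1 = d' := by omega) : ⁅e l, x⁆ ≡ ⁅e l, y⁆ [SMOD decomposables K e t d'] :=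
  lie_smodEq (gen_mem_filtration le_rfl) hxy

theorem shift_lie_smodEq {h : A} {l : ℕ} (hh : ∀ k, ⁅h, e k⁆ = e (l + k)) {r : ℕ}
    {d d' : ℤ} {x y : A} (hxy : x ≡ y [SMOD decomposables K e r d])
    (hd : l + d = d' := by omega) : ⁅h, x⁆ ≡ ⁅h, y⁆ [SMOD decomposables K e r d'] := by
  rw [SModEq.sub_mem] at hxy ⊢
  rw [← lie_sub]
  exact shift_lie_mem_decomposables hh hxy

variable (K e) in
/-- The element of `F(n + 1, d)` whose symbol is the monomial `z ^ (n + 1) * ξ ^ d`, where `e d` has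
symbol `z * ξ ^ d` and commutators correspond to the Poisson bracket `{ξ, z} = z`, i.e.
`{z * ξ ^ k, z ^ r * ξ ^ d} = (k * r - d) * z ^ (r + 1) * ξ ^ (k + d - 1)`. -/
def symbol : ℕ → ℕ → A
  | 0, d => e d
  | n + 1, d => ((d : K) + 1)⁻¹ • ⁅symbol n (d + 1), e 0⁆

theorem symbol_mem_adFiltration (n d : ℕ) : symbol K e n d ∈ adFiltration K e (n + 1) d := by
  induction n generalizing d with
  | zero => exact gen_mem_filtration le_rfl
  | succ n ih =>
    exact Submodule.smul_mem _ _
      (lie_mem_adFiltration (d' := 0) (ih (d + 1)) (gen_mem_filtration le_rfl))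

theorem lie_symbol_succ [CharZero K] (n d : ℕ) :
    ⁅e 0, symbol K e n (d + 1)⁆ = -(((d : K) + 1) • symbol K e (n + 1) d) := by
  rw [symbol, smul_inv_smul₀ (Nat.cast_add_one_ne_zero d), lie_skew]

variable (K e) in
/-- The Poisson bracket
`{z * ξ ^ k, z ^ (n + 1) * ξ ^ d} = (k * (n + 1) - d) * z ^ (n + 2) * ξ ^ m`, `m = k + d - 1`,
for commutators modulo decomposables; the case `k = d = 0`, where the right-hand side vanishes,
has to be stated separately. -/
structure BracketRule (n : ℕ) : Prop where
  lie_zero : ⁅e 0, symbol K e n 0⁆ ≡ 0 [SMOD decomposables K e (n + 2) (-1)]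
  lie_eq : ∀ k d m : ℕ, k + d = m + 1 → ⁅e k, symbol K e n d⁆ ≡
    ((k : K) * (n + 1) - d) • symbol K e (n + 1) m [SMOD decomposables K e (n + 2) m]

variable (K e) in
/-- Modulo decomposables, `h l` multiplies the symbol `z ^ (n + 1) * ξ ^ d` by
`(n + 1) * ξ ^ l`. -/
def ShiftRule (h : ℕ → A) (n : ℕ) : Prop :=
  ∀ l d : ℕ, ⁅h l, symbol K e n d⁆ ≡ ((n : K) + 1) • symbol K e n (l + d)
    [SMOD decomposables K e (n + 1) (l + d : ℕ)]

variable (K e) in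
/-- Modulo decomposables, the part of rank `n + 1` and degree `d` is spanned by the symbol
`z ^ (n + 1) * ξ ^ d`, and vanishes if `d < 0`. -/
structure SpanRule (n : ℕ) : Prop where
  le_of_neg : ∀ d < 0, adFiltration K e (n + 1) d ≤ decomposables K e (n + 1) d
  le_sup_span : ∀ d : ℕ, adFiltration K e (n + 1) d ≤
    decomposables K e (n + 1) d ⊔ Submodule.span K {symbol K e n d}

theorem shiftRule_zero {h : ℕ → A} (hh : ∀ l k, ⁅h l, e k⁆ = e (l + k)) : ShiftRule K e h 0 := by
  intro l d
  simp [symbol, hh, SModEq.refl]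

theorem ShiftRule.succ [CharZero K] {h : ℕ → A} (hh : ∀ l k, ⁅h l, e k⁆ = e (l + k)) {n : ℕ}
    (shift : ShiftRule K e h n) (bracket : BracketRule K e n) : ShiftRule K e h (n + 1) := by
  intro l d
  have h₁ : ⁅h l, ⁅e 0, symbol K e n (d + 1)⁆⁆ =
      ⁅e l, symbol K e n (d + 1)⁆ + ⁅e 0, ⁅h l, symbol K e n (d + 1)⁆⁆ := by
    rw [leibniz_lie, hh, add_zero]
  have h₂ := bracket.lie_eq l (d + 1) (l + d) rfl
  have h₃ := gen_lie_smodEq 0 (shift l (d + 1)) (t := n + 2) (d' := (l + d : ℕ))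
  rw [lie_symbol_succ, lie_neg, lie_smul_eq] at h₁
  rw [lie_smul_eq, ← add_assoc l, lie_symbol_succ] at h₃
  simp only [SModEq.def, Submodule.Quotient.mk_smul, Submodule.Quotient.mk_neg] at h₂ h₃ ⊢
  have h₁ := congrArg (Submodule.Quotient.mk (p := decomposables K e (n + 2) (l + d : ℕ))) h₁
  simp only [Submodule.Quotient.mk_add, Submodule.Quotient.mk_smul,
    Submodule.Quotient.mk_neg] at h₁
  refine smul_right_injective _ (Nat.cast_add_one_ne_zero (R := K) d) ?_
  push_cast at h₂ h₃ ⊢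
  linear_combination (norm := module) -h₁ - h₂ - h₃

theorem spanRule_zero : SpanRule K e 0 := by
  have lie_mem {d : ℤ} {M : Submodule K A} (l : ℕ) (y : A)
      (hy : y ∈ adFiltration K e 0 (d - l + 1)) : ⁅e l, y⁆ ∈ M := by
    rw [(Submodule.eq_bot_iff _).1 (filtration_rank_zero _ _) y hy, lie_zero]
    exact zero_mem M
  refine ⟨fun d hd => adFiltration_succ_le le_rfl (fun _ k hk => by omega) lie_mem,
    fun d => adFiltration_succ_le le_sup_left (fun _ k hk => ?_) lie_mem⟩
  obtain rfl : k = d := by exact_mod_cast hk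
  exact Submodule.mem_sup_right (Submodule.mem_span_singleton_self _)

theorem SpanRule.succ {n : ℕ} (span : SpanRule K e n) (bracket : BracketRule K e n) :
    SpanRule K e (n + 1) := by
  have of_neg {d : ℤ} {l : ℕ} {y : A} (hneg : d - l + 1 < 0)
      (hy : y ∈ adFiltration K e (n + 1) (d - l + 1)) :
      ⁅e l, y⁆ ∈ decomposables K e (n + 2) d :=
    lie_mem_decomposables (gen_mem_filtration le_rfl) (span.le_of_neg _ hneg hy)
  have of_nonneg {d : ℤ} {l q : ℕ} {y : A} (hq : d - l + 1 = q)
      (hy : y ∈ adFiltration K e (n + 1) (d - l + 1)) :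
      ∃ c : K, ⁅e l, y⁆ ≡ c • ⁅e l, symbol K e n q⁆ [SMOD decomposables K e (n + 2) d] := by
    obtain ⟨p, hp, x, hx, rfl⟩ := Submodule.mem_sup.1 (span.le_sup_span q (hq ▸ hy))
    obtain ⟨c, rfl⟩ := Submodule.mem_span_singleton.1 hx
    refine ⟨c, ?_⟩
    rw [lie_add, lie_smul_eq, SModEq.sub_mem, add_sub_cancel_right]
    exact lie_mem_decomposables (gen_mem_filtration le_rfl) hp
  constructor
  · refine fun d hd => adFiltration_succ_le le_rfl (fun h => by omega) fun l y hy => ?_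
    rcases lt_or_ge (d - l + 1) 0 with hneg | hnonneg
    · exact of_neg hneg hy
    obtain ⟨rfl, rfl⟩ : l = 0 ∧ d = -1 := by omega
    obtain ⟨c, hc⟩ := of_nonneg (q := 0) (by simp) hy
    simpa only [smul_zero, SModEq.zero] using hc.trans (bracket.lie_zero.smul c)
  · refine fun m => adFiltration_succ_le le_sup_left (fun h => by omega) fun l y hy => ?_
    rcases lt_or_ge ((m : ℤ) - l + 1) 0 with hneg | hnonneg
    · exact Submodule.mem_sup_left (of_neg hneg hy)
    obtain ⟨q, hq⟩ := Int.eq_ofNat_of_zero_le hnonneg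
    obtain ⟨c, hc⟩ := of_nonneg hq hy
    have := hc.trans ((bracket.lie_eq l q m (by omega)).smul c)
    rw [smul_smul, SModEq.sub_mem] at this
    rw [← sub_add_cancel ⁅e l, y⁆]
    exact Submodule.add_mem_sup this
      (Submodule.smul_mem _ _ (Submodule.mem_span_singleton_self _))

end SymbolCalculus

section BracketRules

attribute [local instance] LieRing.ofAssociativeRing

variable {K A : Type*} [Field K] [Ring A] [Algebra K A] {h e : ℕ → A} {c : K}

variable (K h e c) in
/-- The relations of `SH⁺` between the `e k = D¹_k` and the derivations `ad (h l)`,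
`h l = D⁰_{l + 1}`; the parameter `c` is `κ (κ - 1)`. -/
structure SHSystem : Prop where
  lie_h : ∀ l k, ⁅h l, e k⁆ = e (l + k)
  quad : (3 : K) • ⁅e 2, e 1⁆ - ⁅e 3, e 0⁆ + ⁅e 1, e 0⁆ + c • (e 0 * e 0 + ⁅e 1, e 0⁆) = 0
  cubic : ⁅e 0, ⁅e 0, e 1⁆⁆ = 0

variable (K e) in
/-- The combination of brackets `⁅e a', e b'⁆`, `a' + b' = a + b + 3`, that computes the third
difference in `a` along the antidiagonal. -/
def thirdDiff (a b : ℕ) : A :=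
  ⁅e (a + 3), e b⁆ - (3 : K) • ⁅e (a + 2), e (b + 1)⁆ + (3 : K) • ⁅e (a + 1), e (b + 2)⁆
    - ⁅e a, e (b + 3)⁆

theorem lie_thirdDiff (lie_h : ∀ l k, ⁅h l, e k⁆ = e (l + k)) (l a b : ℕ) :
    ⁅h l, thirdDiff K e a b⁆ = thirdDiff K e (l + a) b + thirdDiff K e a (l + b) := by
  simp only [thirdDiff, lie_add, lie_sub, lie_smul_eq, leibniz_lie (h l), lie_h, ← add_assoc]
  module

theorem lie_zero_symbol_one (cubic : ⁅e 0, ⁅e 0, e 1⁆⁆ = 0) : ⁅e 0, symbol K e 1 0⁆ = 0 := by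
  rw [symbol, symbol, lie_smul_eq, ← lie_skew (e (0 + 1)), lie_neg, cubic, neg_zero, smul_zero]

theorem shift_lie_lie_symbol (lie_h : ∀ l k, ⁅h l, e k⁆ = e (l + k)) {n : ℕ}
    (shift : ShiftRule K e h n) (l k d : ℕ) :
    ⁅h l, ⁅e k, symbol K e n d⁆⁆ ≡
      ⁅e (l + k), symbol K e n d⁆ + ((n : K) + 1) • ⁅e k, symbol K e n (l + d)⁆
      [SMOD decomposables K e (n + 2) (l + k + d - 1)] := by
  have := gen_lie_smodEq k (shift l d) (t := n + 2) (d' := l + k + d - 1)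
  rw [lie_smul_eq] at this
  rw [leibniz_lie, lie_h]
  exact SModEq.rfl.add this

theorem lie_symbol_zero_smodEq (lie_h : ∀ l k, ⁅h l, e k⁆ = e (l + k)) {n : ℕ}
    (shift : ShiftRule K e h n)
    (lie_zero : ⁅e 0, symbol K e n 0⁆ ≡ 0 [SMOD decomposables K e (n + 2) (-1)]) (a : ℕ) :
    ⁅e a, symbol K e n 0⁆ + ((n : K) + 1) • ⁅e 0, symbol K e n a⁆ ≡ 0
      [SMOD decomposables K e (n + 2) (a - 1)] := by
  have h₁ := shift_lie_smodEq (lie_h a) lie_zero (d' := a - 1)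
  have h₂ := shift_lie_lie_symbol lie_h shift a 0 0
  rw [_root_.lie_zero] at h₁
  simp only [add_zero, Nat.cast_zero] at h₂
  exact h₂.symm.trans h₁

variable [CharZero K]

theorem BracketRule.of_smul_smodEq {n : ℕ}
    (lie_zero : ⁅e 0, symbol K e n 0⁆ ≡ 0 [SMOD decomposables K e (n + 2) (-1)])
    (H : ∀ k d m : ℕ, k + d = m + 1 → ((m : K) + 1) • ⁅e k, symbol K e n d⁆ ≡
      ((d : K) - k * (n + 1)) • ⁅e 0, symbol K e n (m + 1)⁆ [SMOD decomposables K e (n + 2) m]) :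
    BracketRule K e n := by
  refine ⟨lie_zero, fun k d m hm => ?_⟩
  have := H k d m hm
  rw [lie_symbol_succ] at this
  simp only [SModEq.def, Submodule.Quotient.mk_smul, Submodule.Quotient.mk_neg] at this ⊢
  refine smul_right_injective _ (Nat.cast_add_one_ne_zero (R := K) m) ?_
  linear_combination (norm := module) this

theorem SHSystem.thirdDiff_mem (S : SHSystem K h e c) (a b : ℕ) :
    thirdDiff K e a b ∈ adFiltration K e 2 (a + b : ℕ) := by
  have lie_mem (l : ℕ) {a b : ℕ} (h : thirdDiff K e a b ∈ adFiltration K e 2 (a + b : ℕ)) :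
      thirdDiff K e (l + a) b + thirdDiff K e a (l + b) ∈ adFiltration K e 2 (l + a + b : ℕ) := by
    rw [← lie_thirdDiff S.lie_h]
    exact shift_lie_mem_adFiltration (S.lie_h l) h
  have zero_zero : thirdDiff K e 0 0 ∈ adFiltration K e 2 0 := by
    have e_mem : e 0 ∈ adFiltration K e 1 0 := gen_mem_filtration le_rfl
    have lie_e_mem : ⁅e 1, e 0⁆ ∈ adFiltration K e 2 0 := gen_lie_mem_adFiltration 1 e_mem
    have : thirdDiff K e 0 0 = (2 : K) • (⁅e 1, e 0⁆ + c • (e 0 * e 0 + ⁅e 1, e 0⁆)) := by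
      rw [thirdDiff, ← lie_skew (e 1) (e 2), ← lie_skew (e 0) (e 3)]
      linear_combination (norm := module) -(2 : K) • S.quad
    rw [this]
    exact Submodule.smul_mem _ _ (add_mem lie_e_mem
      (Submodule.smul_mem _ _ (add_mem (mul_mem_filtration e_mem e_mem) lie_e_mem)))
  have col_zero (a : ℕ) : thirdDiff K e a 0 ∈ adFiltration K e 2 a := by
    have symm : thirdDiff K e 0 a = thirdDiff K e a 0 := by
      simp only [thirdDiff]
      rw [← lie_skew (e (0 + 3)), ← lie_skew (e (0 + 2)), ← lie_skew (e (0 + 1)),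
        ← lie_skew (e 0)]
      module
    have := lie_mem (a := 0) (b := 0) a zero_zero
    simp only [add_zero] at this
    rw [symm, ← two_smul K] at this
    exact (Submodule.smul_mem_iff _ (two_ne_zero (α := K))).1 this
  have := sub_mem (lie_mem (a := a) (b := 0) b (col_zero a)) (col_zero (b + a))
  rwa [add_sub_cancel_left, add_zero, add_zero, add_comm b a] at this

theorem SHSystem.bracketRule_zero (S : SHSystem K h e c) : BracketRule K e 0 := by
  refine .of_smul_smodEq (by rw [symbol, lie_self]) fun k d m hm => ?_
  let Y (a b : ℕ) : A ⧸ decomposables K e 2 m := Submodule.Quotient.mk ⁅e a, e b⁆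
  have antisymm (a b : ℕ) : Y a b + Y b a = 0 := by
    rw [← Submodule.Quotient.mk_add, ← lie_skew, neg_add_cancel, Submodule.Quotient.mk_zero]
  have third (a b : ℕ) (hab : a + b + 3 = m + 1) :
      Y (a + 3) b - (3 : K) • Y (a + 2) (b + 1) + (3 : K) • Y (a + 1) (b + 2) - Y a (b + 3) = 0 :=
    (Submodule.Quotient.mk_eq_zero _).2 (mem_decomposables_of_lt (S.thirdDiff_mem a b))
  have := smul_eq_of_thirdDiff_eq_zero (fun a b _ => antisymm a b) third hm
  simpa [SModEq.def, symbol] using this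

theorem lie_one_symbol_zero {i : ℕ} (rule : BracketRule K e i) :
    ⁅e 1, symbol K e i 0⁆ ≡ ((i : K) + 1) • symbol K e (i + 1) 0
      [SMOD decomposables K e (i + 2) 0] := by
  simpa using rule.lie_eq 1 0 0 rfl

theorem lie_lie_two_symbol_zero {i : ℕ} (rule : BracketRule K e i) :
    ⁅⁅e 0, e 2⁆, symbol K e i 0⁆ ≡ (-2 * ((i : K) + 1)) • symbol K e (i + 2) 0
      [SMOD decomposables K e (i + 3) 0] := by
  have h₁ := gen_lie_smodEq 0 (rule.lie_eq 2 0 1 rfl) (t := i + 3) (d' := 0)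
  have h₂ := gen_lie_smodEq 2 rule.lie_zero (t := i + 3) (d' := 0)
  rw [lie_smul_eq, lie_symbol_succ] at h₁
  rw [lie_lie]
  simp only [SModEq.def, Submodule.Quotient.mk_sub, Submodule.Quotient.mk_smul,
    Submodule.Quotient.mk_neg, lie_zero, Submodule.Quotient.mk_zero] at h₁ h₂ ⊢
  push_cast at h₁
  linear_combination (norm := module) h₁ - h₂

theorem add_smul_lie_symbol_succ_smodEq_zero {i j : ℕ} (rule_i : BracketRule K e i)
    (rule_j : BracketRule K e j)
    (neg : adFiltration K e (i + j + 2) (-1) ≤ decomposables K e (i + j + 2) (-1)) :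
    ((i : K) + 1) • ⁅symbol K e (i + 1) 0, symbol K e j 0⁆
      + ((j : K) + 1) • ⁅symbol K e i 0, symbol K e (j + 1) 0⁆ ≡ 0
      [SMOD decomposables K e (i + j + 3) (-1)] := by
  have mem : ⁅e 1, ⁅symbol K e i 0, symbol K e j 0⁆⁆ ∈ decomposables K e (i + j + 3) (-1) :=
    lie_mem_decomposables (gen_mem_filtration le_rfl) (neg (lie_mem_adFiltration
      (symbol_mem_adFiltration i 0) (symbol_mem_adFiltration j 0)))
  have h₁ := smodEq_lie (symbol_mem_adFiltration j 0) (lie_one_symbol_zero rule_i)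
    (t := i + j + 3) (d'' := -1)
  have h₂ := lie_smodEq (symbol_mem_adFiltration i 0) (lie_one_symbol_zero rule_j)
    (t := i + j + 3) (d'' := -1)
  rw [smul_lie] at h₁
  rw [lie_smul_eq] at h₂
  rw [leibniz_lie] at mem
  exact (h₁.symm.add h₂.symm).trans (SModEq.zero.2 mem)

theorem add_smul_lie_symbol_add_two_smodEq_zero {i j : ℕ} (rule_i : BracketRule K e i)
    (rule_j : BracketRule K e j)
    (neg : adFiltration K e (i + j + 2) (-1) ≤ decomposables K e (i + j + 2) (-1)) :
    ((i : K) + 1) • ⁅symbol K e (i + 2) 0, symbol K e j 0⁆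
      + ((j : K) + 1) • ⁅symbol K e i 0, symbol K e (j + 2) 0⁆ ≡ 0
      [SMOD decomposables K e (i + j + 4) (-1)] := by
  have mem : ⁅⁅e 0, e 2⁆, ⁅symbol K e i 0, symbol K e j 0⁆⁆ ∈
      decomposables K e (i + j + 4) (-1) :=
    lie_mem_decomposables (r := 2) (d := 1)
      (gen_lie_mem_adFiltration 0 (gen_mem_filtration le_rfl) rfl (by simp))
      (neg (lie_mem_adFiltration (symbol_mem_adFiltration i 0) (symbol_mem_adFiltration j 0)))
  have h₁ := smodEq_lie (symbol_mem_adFiltration j 0) (lie_lie_two_symbol_zero rule_i)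
    (t := i + j + 4) (d'' := -1)
  have h₂ := lie_smodEq (symbol_mem_adFiltration i 0) (lie_lie_two_symbol_zero rule_j)
    (t := i + j + 4) (d'' := -1)
  rw [smul_lie] at h₁
  rw [lie_smul_eq] at h₂
  rw [leibniz_lie] at mem
  have := (h₁.symm.add h₂.symm).trans (SModEq.zero.2 mem)
  simp only [SModEq.def, Submodule.Quotient.mk_add, Submodule.Quotient.mk_smul,
    Submodule.Quotient.mk_zero] at this ⊢
  linear_combination (norm := module) (-2⁻¹ : K) • this

/-- In degree `-1`, expanding `⁅e 1, ⁅symbol i, symbol j⁆⁆` and `⁅⁅e 0, e 2⁆, ⁅symbol i, symbol j⁆⁆`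
gives three linear equations for the three brackets `⁅symbol i, symbol j⁆` with `i + j = n + 2` and
`i ≤ 2`, and eliminating leaves `(n + 1) * (n + 4)` times the one with `i = 0`. -/
theorem lie_zero_symbol_add_two {n : ℕ} (rule : ∀ i < n + 2, BracketRule K e i)
    (neg : ∀ i ≤ n + 2, adFiltration K e (i + 1) (-1) ≤ decomposables K e (i + 1) (-1)) :
    ⁅e 0, symbol K e (n + 2) 0⁆ ≡ 0 [SMOD decomposables K e (n + 4) (-1)] := by
  have h₁ := add_smul_lie_symbol_succ_smodEq_zero (i := 0) (j := n + 1) (rule 0 (by omega))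
    (rule (n + 1) (by omega)) (by convert neg (n + 2) le_rfl using 2 <;> ring)
  have h₂ := add_smul_lie_symbol_succ_smodEq_zero (i := 1) (j := n) (rule 1 (by omega))
    (rule n (by omega)) (by convert neg (n + 2) le_rfl using 2 <;> ring)
  have h₃ := add_smul_lie_symbol_add_two_smodEq_zero (i := 0) (j := n) (rule 0 (by omega))
    (rule n (by omega)) (by convert neg (n + 1) (by omega) using 2 <;> ring)
  simp only [SModEq.def, Submodule.Quotient.mk_add, Submodule.Quotient.mk_smul,
    Submodule.Quotient.mk_zero, show 1 + n + 3 = n + 4 by ring, zero_add,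
    one_add_one_eq_two] at h₁ h₂ h₃ ⊢
  have hn : ((n : K) + 1) * (n + 4) ≠ 0 := by norm_cast
  refine smul_right_injective _ hn ?_
  push_cast at h₁ h₂ h₃
  change _ • Submodule.Quotient.mk ⁅symbol K e 0 0, symbol K e (n + 2) 0⁆ = _
  linear_combination (norm := module) ((n : K) + 1) • h₁ - h₂ + (2 : K) • h₃

theorem lie_symbol_add_lie_symbol_smodEq (lie_h : ∀ l k, ⁅h l, e k⁆ = e (l + k)) {n : ℕ}
    (shift : ShiftRule K e h n)
    (lie_zero : ⁅e 0, symbol K e n 0⁆ ≡ 0 [SMOD decomposables K e (n + 2) (-1)])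
    {a b m : ℕ} (hab : a + b = m + 1) :
    ⁅e a, symbol K e n b⁆ + ⁅e b, symbol K e n a⁆ ≡ (-(n : K)) • ⁅e 0, symbol K e n (m + 1)⁆
      [SMOD decomposables K e (n + 2) m] := by
  have h₁ := shift_lie_smodEq (lie_h b) (lie_symbol_zero_smodEq lie_h shift lie_zero a)
    (d' := (m : ℤ))
  have h₂ := shift_lie_lie_symbol lie_h shift b a 0
  have h₃ := shift_lie_lie_symbol lie_h shift b 0 a
  have h₄ := lie_symbol_zero_smodEq lie_h shift lie_zero (m + 1)
  have hba : b + a = m + 1 := by omega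
  have hm : (b : ℤ) + a - 1 = m := by omega
  rw [lie_add, lie_smul_eq, _root_.lie_zero] at h₁
  simp only [SModEq.def, Submodule.Quotient.mk_add, Submodule.Quotient.mk_smul,
    Submodule.Quotient.mk_zero, add_zero, hba, hm, Nat.cast_zero, Nat.cast_add, Nat.cast_one,
    add_sub_cancel_right] at h₁ h₂ h₃ h₄ ⊢
  refine smul_right_injective _ (Nat.cast_add_one_ne_zero (R := K) n) ?_
  linear_combination (norm := module) h₁ - h₂ - ((n : K) + 1) • h₃ - h₄

theorem sub_smul_lie_symbol_smodEq (t : ℕ) (rule₀ : BracketRule K e 0)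
    {j k m : ℕ} (hjk : k + j = m + 2) :
    ((k : K) - j) • ⁅symbol K e 1 (m + 1), symbol K e t 0⁆ ≡
      ⁅e k, ⁅e j, symbol K e t 0⁆⁆ - ⁅e j, ⁅e k, symbol K e t 0⁆⁆
      [SMOD decomposables K e (t + 3) m] := by
  have := smodEq_lie (symbol_mem_adFiltration t 0) (rule₀.lie_eq k j (m + 1) hjk)
    (t := t + 3) (d'' := m)
  rw [smul_lie] at this
  rw [← lie_lie]
  simpa [symbol] using this.symm

theorem lie_symbol_one_smodEq {t : ℕ} (rule₀ : BracketRule K e 0) (rule : BracketRule K e t)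
    (m : ℕ) : ⁅symbol K e 1 (m + 1), symbol K e t 0⁆ ≡
      (-((t : K) + 1)) • ⁅e 0, symbol K e (t + 1) (m + 1)⁆ [SMOD decomposables K e (t + 3) m] := by
  have h₁ := sub_smul_lie_symbol_smodEq t rule₀ (k := 0) (zero_add (m + 2))
  have h₂ := gen_lie_smodEq 0 (rule.lie_eq (m + 2) 0 (m + 1) rfl) (t := t + 3) (d' := m)
  have h₃ := gen_lie_smodEq (m + 2) rule.lie_zero (t := t + 3) (d' := m)
  rw [lie_smul_eq] at h₂
  rw [lie_zero] at h₃
  simp only [SModEq.def, Submodule.Quotient.mk_sub, Submodule.Quotient.mk_smul,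
    Submodule.Quotient.mk_zero] at h₁ h₂ h₃ ⊢
  have hm : (m : K) + 2 ≠ 0 := by norm_cast
  refine smul_right_injective _ hm ?_
  push_cast at h₁ h₂
  linear_combination (norm := module) -h₁ - h₂ + h₃

theorem smul_lie_symbol_sub_smodEq {t : ℕ} (rule₀ : BracketRule K e 0) (rule : BracketRule K e t)
    {j k m : ℕ} (hjk : j + k = m) :
    ((j : K) + 1) • (⁅e (k + 1), symbol K e (t + 1) j⁆ - ⁅e 0, symbol K e (t + 1) (m + 1)⁆) ≡
      ((k : K) + 1) • (⁅e (j + 1), symbol K e (t + 1) k⁆ - ⁅e 0, symbol K e (t + 1) (m + 1)⁆)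
      [SMOD decomposables K e (t + 3) m] := by
  have h₁ := sub_smul_lie_symbol_smodEq t rule₀ (k := k + 1) (j := j + 1) (m := m) (by omega)
  have h₂ := lie_symbol_one_smodEq rule₀ rule m
  have h₃ := gen_lie_smodEq (k + 1) (rule.lie_eq (j + 1) 0 j rfl) (t := t + 3) (d' := m)
  have h₄ := gen_lie_smodEq (j + 1) (rule.lie_eq (k + 1) 0 k rfl) (t := t + 3) (d' := m)
  rw [lie_smul_eq] at h₃ h₄
  simp only [SModEq.def, Submodule.Quotient.mk_sub, Submodule.Quotient.mk_smul] at h₁ h₂ h₃ h₄ ⊢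
  refine smul_right_injective _ (Nat.cast_add_one_ne_zero (R := K) t) ?_
  push_cast at h₁ h₃ h₄
  linear_combination (norm := module) -h₁ + ((k : K) - j) • h₂ - h₃ + h₄

theorem BracketRule.succ {t : ℕ} (lie_h : ∀ l k, ⁅h l, e k⁆ = e (l + k))
    (rule₀ : BracketRule K e 0) (rule : BracketRule K e t) (shift : ShiftRule K e h (t + 1))
    (lie_zero : ⁅e 0, symbol K e (t + 1) 0⁆ ≡ 0 [SMOD decomposables K e (t + 3) (-1)]) :
    BracketRule K e (t + 1) := by
  refine .of_smul_smodEq lie_zero fun k d m hm => ?_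
  let Y (a b : ℕ) : A ⧸ decomposables K e (t + 3) m :=
    Submodule.Quotient.mk ⁅e a, symbol K e (t + 1) b⁆
  have symm (a b : ℕ) (hab : a + b = m + 1) :
      Y a b + Y b a = (1 - ((t + 1 : ℕ) + 1 : K)) • Y 0 (m + 1) := by
    rw [sub_add_cancel_right]
    exact lie_symbol_add_lie_symbol_smodEq lie_h shift lie_zero hab
  have cross (j k : ℕ) (hjk : j + k = m) : ((j : K) + 1) • (Y (k + 1) j - Y 0 (m + 1)) =
      ((k : K) + 1) • (Y (j + 1) k - Y 0 (m + 1)) :=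
    smul_lie_symbol_sub_smodEq rule₀ rule hjk
  exact smul_eq_of_symm_of_cross symm cross hm

end BracketRules

section Commutators

attribute [local instance] LieRing.ofAssociativeRing

variable {K A : Type*} [Field K] [CharZero K] [Ring A] [Algebra K A] {h e : ℕ → A} {c : K}

theorem SHSystem.symbol_rules (S : SHSystem K h e c) (n : ℕ) :
    BracketRule K e n ∧ ShiftRule K e h n ∧ SpanRule K e n := by
  induction n using Nat.strong_induction_on with
  | _ n ih =>
  rcases n with - | n
  · exact ⟨S.bracketRule_zero, shiftRule_zero S.lie_h, spanRule_zero⟩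
  obtain ⟨bracket, shift, span⟩ := ih n (by omega)
  have span_succ : SpanRule K e (n + 1) := span.succ bracket
  have shift_succ : ShiftRule K e h (n + 1) := shift.succ S.lie_h bracket
  have lie_zero : ⁅e 0, symbol K e (n + 1) 0⁆ ≡ 0 [SMOD decomposables K e (n + 3) (-1)] := by
    rcases n with - | n
    · rw [lie_zero_symbol_one S.cubic]
    refine lie_zero_symbol_add_two (fun i hi => (ih i hi).1) fun i hi => ?_
    rcases hi.eq_or_lt with rfl | hi
    · exact span_succ.le_of_neg (-1) (by norm_num)
    · exact (ih i hi).2.2.le_of_neg (-1) (by norm_num)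
  have bracket₀ : BracketRule K e 0 := S.bracketRule_zero
  exact ⟨bracket₀.succ S.lie_h bracket shift_succ lie_zero, shift_succ, span_succ⟩

theorem SHSystem.adFiltration_eq_bot_of_neg (S : SHSystem K h e c) (r : ℕ) {d : ℤ} (hd : d < 0) :
    adFiltration K e r d = ⊥ := by
  refine adFiltration_eq_bot_of_le_decomposables (fun r d hd => ?_) r hd
  rcases r with - | n
  · exact (filtration_rank_zero _ d).le.trans bot_le
  · exact (S.symbol_rules n).2.2.le_of_neg d hd

theorem SHSystem.filtration_eq_adFiltration (S : SHSystem K h e c) (r : ℕ) (d : ℤ) :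
    filtration K e (Set.Ici 0) r d = adFiltration K e r d := by
  refine le_antisymm (filtration_mono_left (Set.subset_univ _) r d) fun x hx => ?_
  induction hx with
  | zero => exact zero_mem _
  | add _ _ ihx ihy => exact add_mem ihx ihy
  | smul a _ ih => exact Submodule.smul_mem _ a ih
  | gen hk => exact .gen hk
  | mul _ _ iha ihb => exact .mul iha ihb
  | @lie r d y l _ hy ih =>
    rcases lt_or_ge d 0 with hneg | hnonneg
    · rw [(Submodule.eq_bot_iff _).1 (S.adFiltration_eq_bot_of_neg r hneg) y hy, lie_zero]
      exact zero_mem _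
    · exact .lie l hnonneg ih

theorem statement6_general (S : SHSystem K h e c) {r₁ r₂ : ℕ} {d₁ d₂ : ℤ} {a b : A}
    (ha : a ∈ filtration K e (Set.Ici 0) r₁ d₁) (hb : b ∈ filtration K e (Set.Ici 0) r₂ d₂) :
    ⁅a, b⁆ ∈ filtration K e (Set.Ici 0) (r₁ + r₂) (d₁ + d₂ - 1) := by
  rw [S.filtration_eq_adFiltration] at ha hb ⊢
  exact lie_mem_adFiltration ha hb

end Commutators

section Presentation

attribute [local instance] LieRing.ofAssociativeRing

theorem SHSystem.of_presentation : SHSystem F (fun l => D0 (l + 1)) D1 (κ * (κ - 1)) where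
  lie_h l k := by
    simpa only [br, D0, D1, Ring.lie_def, Nat.add_sub_cancel, map_sub, map_mul]
      using RingQuot.mkAlgHom_rel F (SHRel.mix l k)
  quad := by
    rw [Algebra.smul_def, map_ofNat]
    simpa only [br, D1, Ring.lie_def, map_sub, map_mul, map_add, map_smul, map_zero, map_ofNat]
      using RingQuot.mkAlgHom_rel F SHRel.quad
  cubic := by
    simpa only [br, D1, Ring.lie_def, map_sub, map_mul, map_zero]
      using RingQuot.mkAlgHom_rel F SHRel.cubic

theorem FiltAux_one (f : ℕ) (d : ℤ) :
    FiltAux f 1 d = Submodule.span F {x | ∃ k : ℕ, (k : ℤ) ≤ d ∧ x = D1 k} := by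
  cases f <;> rw [FiltAux]

theorem FiltAux_le_filtration (f r : ℕ) (d : ℤ) :
    FiltAux f r d ≤ filtration F D1 (Set.Ici 0) r d := by
  induction f generalizing r d with
  | zero =>
    match r with
    | 0 | _ + 2 => simp [FiltAux]
    | 1 =>
      rw [FiltAux_one, Submodule.span_le]
      rintro _ ⟨k, hk, rfl⟩
      exact gen_mem_filtration hk
  | succ f ih =>
    match r with
    | 0 => simp [FiltAux]
    | 1 =>
      rw [FiltAux_one, Submodule.span_le]
      rintro _ ⟨k, hk, rfl⟩
      exact gen_mem_filtration hk
    | n + 2 =>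
      rw [FiltAux, Submodule.span_le]
      rintro _ (⟨r', r'', d', d'', -, -, hr, hd, a, ha, b, hb, rfl⟩ | ⟨l, hl, y, hy, rfl⟩)
      · exact mul_mem_filtration (ih _ _ ha) (ih _ _ hb) hr hd
      · have := FiltrationMem.lie (I := Set.Ici 0) l (Set.mem_Ici.2 (by omega)) (ih _ _ hy)
        rwa [show d - l + 1 + l - 1 = d by ring] at this

theorem filtration_le_FiltAux {f r : ℕ} (d : ℤ) (hr : r ≤ f + 1) :
    filtration F D1 (Set.Ici 0) r d ≤ FiltAux f r d := by
  have of_rank_zero {d : ℤ} {a : SHp} (ha : FiltrationMem F D1 (Set.Ici 0) 0 d a) : a = 0 :=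
    (Submodule.eq_bot_iff _).1 (filtration_rank_zero _ _) a ha
  intro x hx
  induction hx generalizing f with
  | zero => exact zero_mem _
  | add _ _ ihx ihy => exact add_mem (ihx hr) (ihy hr)
  | smul c _ ih => exact Submodule.smul_mem _ c (ih hr)
  | @gen k d hk =>
    rw [FiltAux_one]
    exact Submodule.subset_span ⟨k, hk, rfl⟩
  | @mul r s d d' a b ha hb iha ihb =>
    rcases r.eq_zero_or_pos with rfl | hr₀
    · rw [of_rank_zero ha, zero_mul]
      exact zero_mem _
    rcases s.eq_zero_or_pos with rfl | hs₀
    · rw [of_rank_zero hb, mul_zero]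
      exact zero_mem _
    obtain ⟨f, rfl⟩ : ∃ g, f = g + 1 := ⟨f - 1, by omega⟩
    obtain ⟨n, hn⟩ : ∃ n, r + s = n + 2 := ⟨r + s - 2, by omega⟩
    rw [hn, FiltAux]
    exact Submodule.subset_span (Or.inl ⟨r, s, d, d', hr₀, hs₀, hn, rfl,
      a, iha (by omega), b, ihb (by omega), rfl⟩)
  | @lie r d y l hd hy ih =>
    rcases r with - | n
    · rw [of_rank_zero hy, lie_zero]
      exact zero_mem _
    obtain ⟨f, rfl⟩ : ∃ g, f = g + 1 := ⟨f - 1, by omega⟩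
    rw [FiltAux]
    refine Submodule.subset_span (Or.inr ⟨l, ?_, y, ?_, rfl⟩)
    · rw [Set.mem_Ici] at hd
      omega
    · rw [show d + l - 1 - l + 1 = d by ring]
      exact ih (by omega)

theorem Filt_eq_filtration (r : ℕ) (d : ℤ) : Filt r d = filtration F D1 (Set.Ici 0) r d :=
  le_antisymm (FiltAux_le_filtration r r d) (filtration_le_FiltAux d r.le_succ)

end Presentation

/-- For `a ∈ F(r₁,d₁)` and `b ∈ F(r₂,d₂)` (with `r₁, r₂ ≥ 1`), the commutator
`[a,b]` lies in `F(r₁+r₂, d₁+d₂-1)`. -/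
theorem statement6 :
    ∀ (r₁ r₂ : ℕ) (d₁ d₂ : ℤ), 1 ≤ r₁ → 1 ≤ r₂ →
      ∀ a ∈ Filt r₁ d₁, ∀ b ∈ Filt r₂ d₂, br a b ∈ Filt (r₁ + r₂) (d₁ + d₂ - 1) := by
  have : CharZero F := charZero_of_injective_algebraMap (algebraMap ℂ F).injective
  simp only [Filt_eq_filtration]
  exact fun r₁ r₂ d₁ d₂ _ _ a ha b hb => statement6_general .of_presentation ha hb
end
end
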